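/- arXiv:1405.5932 — 7 statements merged into one kernel-verified Lean document; each statement's English description precedes it below -/
import Mathlib

section
/- Let A, ε ∈ ℝ with ε > 0 and A − ε > 1, let M ≥ 1 be an integer, set r = (A−ε)/(A+ε), and define h*_l = (1/2)·(1 − r^l)/(1 − r^M) for l = 0,…,M. Then for every strictly increasing sequence h_0 = 0 < h_1 < ⋯ < h_M = 1/2 of reals, max over l ∈ {0,…,M−1} of ((A+ε)·h_{l+1} − (A−ε)·h_l) ≥ ε/(1 − r^M), and equality holds if and only if h_l = h*_l for every l. In particular, h* is such a sequence and all of its expansion rates (A+ε)·h*_{l+1} − (A−ε)·h*_l are equal to ε/(1 − r^M). -/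
/-!
Write `w l = a * h (l + 1) - b * h l`. With the positive weights `a ^ l * b ^ (M - 1 - l)` the rates
telescope, so their weighted sum depends only on `h 0` and `h M`. Two sequences with the same
endpoints therefore have the same weighted average rate. If all rates of one of them are equal, that
common value is this average; the largest rate of the other is at least the average, with equality
only if all its rates agree with it, and then the recurrence `a * h (l + 1) = b * h l + w l` forces
the two sequences to coincide.
-/

open Finset

/-- The expansion rate of a quantizer on its `l`-th cell `[h l, h (l + 1)]`, for an uncertain plant
parameter between `b` and `a`. In the notation of the paper, `a = A + ε` and `b = A - ε`. -/
def expansionRate {R : Type*} [Ring R] (a b : R) (h : ℕ → R) (l : ℕ) : R :=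
  a * h (l + 1) - b * h l

/-- The boundaries of the quantizer of `[0, c]` with `M` cells whose widths form a geometric
progression of ratio `r`. Geometric sums are used instead of `(1 - r ^ l) / (1 - r ^ M)` so that
`r = 1` gives the uniform quantizer. -/
def geometricBoundary {K : Type*} [Field K] (c r : K) (M l : ℕ) : K :=
  c * (∑ i ∈ range l, r ^ i) / ∑ i ∈ range M, r ^ i

theorem sum_pow_mul_pow_mul_expansionRate {R : Type*} [CommRing R] (a b : R) (h : ℕ → R) (M : ℕ) :
    ∑ l ∈ range M, a ^ l * b ^ (M - 1 - l) * expansionRate a b h l =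
      a ^ M * h M - b ^ M * h 0 := by
  have telescope : ∀ l ∈ range M, a ^ l * b ^ (M - 1 - l) * expansionRate a b h l =
      a ^ (l + 1) * b ^ (M - (l + 1)) * h (l + 1) - a ^ l * b ^ (M - l) * h l := by
    intro l hl
    have hexp : M - l = M - 1 - l + 1 := by grind
    rw [hexp, show M - (l + 1) = M - 1 - l by lia, expansionRate]
    ring
  rw [sum_congr rfl telescope, sum_range_sub (fun l => a ^ l * b ^ (M - l) * h l)]
  simp

theorem eq_of_expansionRate_eq {R : Type*} [Ring R] [IsDomain R] {a b : R} {h g : ℕ → R} {M : ℕ}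
    (ha : a ≠ 0) (h_zero : h 0 = g 0)
    (hrate : ∀ l < M, expansionRate a b h l = expansionRate a b g l) :
    ∀ l ≤ M, h l = g l := by
  intro l hl
  induction l with
  | zero => exact h_zero
  | succ l ih =>
    have hstep := hrate l hl
    rw [expansionRate, expansionRate, ih (by lia), sub_left_inj] at hstep
    exact mul_left_cancel₀ ha hstep

section Comparison

variable {R : Type*} [CommRing R] [LinearOrder R] [IsStrictOrderedRing R]
  {a b : R} {h g : ℕ → R} {M : ℕ}

theorem exists_expansionRate_le (ha : 0 < a) (hb : 0 < b) (hM : M ≠ 0)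
    (h_zero : h 0 = g 0) (h_last : h M = g M) :
    ∃ l < M, expansionRate a b g l ≤ expansionRate a b h l := by
  have hsum : ∑ l ∈ range M, a ^ l * b ^ (M - 1 - l) * expansionRate a b g l ≤
      ∑ l ∈ range M, a ^ l * b ^ (M - 1 - l) * expansionRate a b h l := by
    simp only [sum_pow_mul_pow_mul_expansionRate, h_zero, h_last, le_refl]
  obtain ⟨l, hl, hle⟩ := exists_le_of_sum_le (nonempty_range_iff.mpr hM) hsum
  exact ⟨l, mem_range.mp hl, le_of_mul_le_mul_left hle (by positivity)⟩

theorem eq_of_expansionRate_le (ha : 0 < a) (hb : 0 < b)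
    (h_zero : h 0 = g 0) (h_last : h M = g M)
    (hle : ∀ l < M, expansionRate a b h l ≤ expansionRate a b g l) :
    ∀ l ≤ M, h l = g l := by
  have hweight (l : ℕ) : 0 < a ^ l * b ^ (M - 1 - l) := by positivity
  have hsum : ∑ l ∈ range M, a ^ l * b ^ (M - 1 - l) * expansionRate a b h l =
      ∑ l ∈ range M, a ^ l * b ^ (M - 1 - l) * expansionRate a b g l := by
    simp only [sum_pow_mul_pow_mul_expansionRate, h_zero, h_last]
  have hterm := (sum_eq_sum_iff_of_le fun l hl =>
    mul_le_mul_of_nonneg_left (hle l (mem_range.mp hl)) (hweight l).le).mp hsum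
  exact eq_of_expansionRate_eq ha.ne' h_zero fun l hl =>
    mul_left_cancel₀ (hweight l).ne' (hterm l (mem_range.mpr hl))

variable {μ : R}

theorem le_sup'_expansionRate (ha : 0 < a) (hb : 0 < b) (hM : M ≠ 0)
    (h_zero : h 0 = g 0) (h_last : h M = g M) (hg : ∀ l < M, expansionRate a b g l = μ) :
    μ ≤ (range M).sup' (nonempty_range_iff.mpr hM) (expansionRate a b h) := by
  obtain ⟨l, hl, hle⟩ := exists_expansionRate_le ha hb hM h_zero h_last
  exact le_sup'_of_le _ (mem_range.mpr hl) (hg l hl ▸ hle)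

theorem sup'_expansionRate_eq_iff (ha : 0 < a) (hb : 0 < b) (hM : M ≠ 0)
    (h_zero : h 0 = g 0) (h_last : h M = g M) (hg : ∀ l < M, expansionRate a b g l = μ) :
    (range M).sup' (nonempty_range_iff.mpr hM) (expansionRate a b h) = μ ↔
      ∀ l ≤ M, h l = g l := by
  refine ⟨fun hsup => eq_of_expansionRate_le ha hb h_zero h_last fun l hl => ?_, fun heq => ?_⟩
  · rw [hg l hl, ← hsup]
    exact le_sup' _ (mem_range.mpr hl)
  · refine sup'_eq_of_forall _ _ fun l hl => ?_
    have hl := mem_range.mp hl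
    rw [← hg l hl, expansionRate, expansionRate, heq l hl.le, heq (l + 1) hl]

end Comparison

section GeometricBoundary

variable {K : Type*} [Field K]

theorem geometricBoundary_zero (c r : K) (M : ℕ) : geometricBoundary c r M 0 = 0 := by
  simp [geometricBoundary]

theorem geometricBoundary_eq_of_ne_one (c : K) {r : K} (hr : r ≠ 1) (M l : ℕ) :
    geometricBoundary c r M l = c * (1 - r ^ l) / (1 - r ^ M) := by
  rw [geometricBoundary, ← mul_neg_geom_sum, ← mul_neg_geom_sum, mul_left_comm,
    mul_div_mul_left _ _ (sub_ne_zero.mpr hr.symm)]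

theorem expansionRate_geometricBoundary {a : K} (ha : a ≠ 0) (b c : K) (M l : ℕ) :
    expansionRate a b (geometricBoundary c (b / a) M) l =
      a * c / ∑ i ∈ range M, (b / a) ^ i := by
  have hratio : a * (b / a) = b := mul_div_cancel₀ b ha
  simp only [expansionRate, geometricBoundary, geom_sum_succ]
  linear_combination (c * (∑ i ∈ range l, (b / a) ^ i) / ∑ i ∈ range M, (b / a) ^ i) * hratio

theorem mul_div_geom_sum_div_of_ne {a b : K} (ha : a ≠ 0) (hab : b ≠ a) (c : K) (M : ℕ) :
    a * c / ∑ i ∈ range M, (b / a) ^ i = c * (a - b) / (1 - (b / a) ^ M) := by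
  have hratio : 1 - b / a ≠ 0 := sub_ne_zero.mpr (Ne.symm (mt (div_eq_one_iff_eq ha).mp hab))
  have hnum : c * (a - b) = (1 - b / a) * (a * c) := by field_simp
  rw [hnum, ← mul_neg_geom_sum, mul_div_mul_left _ _ hratio]

variable [LinearOrder K] [IsStrictOrderedRing K] {c r : K} {M : ℕ}

theorem geometricBoundary_last (c : K) (hr : 0 ≤ r) (hM : M ≠ 0) :
    geometricBoundary c r M M = c :=
  mul_div_cancel_right₀ c (geom_sum_pos hr hM).ne'

theorem strictMono_geometricBoundary (hc : 0 < c) (hr : 0 < r) (hM : M ≠ 0) :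
    StrictMono (geometricBoundary c r M) := by
  refine strictMono_nat_of_lt_succ fun l => ?_
  have hsum : ∑ i ∈ range l, r ^ i < ∑ i ∈ range (l + 1), r ^ i := by
    rw [sum_range_succ]
    exact lt_add_of_pos_right _ (pow_pos hr l)
  exact div_lt_div_of_pos_right (mul_lt_mul_of_pos_left hsum hc) (geom_sum_pos hr.le hM)

end GeometricBoundary

theorem stmt_4_general {K : Type*} [Field K] [LinearOrder K] [IsStrictOrderedRing K]
    {a b c : K} (ha : 0 < a) (hb : 0 < b) (hc : 0 < c) {M : ℕ} (hM : M ≠ 0) :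
    (∀ h : ℕ → K, h 0 = 0 → h M = c →
      a * c / (∑ i ∈ range M, (b / a) ^ i) ≤
          (range M).sup' (nonempty_range_iff.mpr hM) (expansionRate a b h) ∧
        ((range M).sup' (nonempty_range_iff.mpr hM) (expansionRate a b h) =
            a * c / (∑ i ∈ range M, (b / a) ^ i) ↔
          ∀ l ≤ M, h l = geometricBoundary c (b / a) M l)) ∧
    geometricBoundary c (b / a) M 0 = 0 ∧
    geometricBoundary c (b / a) M M = c ∧
    StrictMono (geometricBoundary c (b / a) M) ∧
    ∀ l, expansionRate a b (geometricBoundary c (b / a) M) l =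
      a * c / ∑ i ∈ range M, (b / a) ^ i := by
  have hr : 0 < b / a := div_pos hb ha
  have g_zero := geometricBoundary_zero c (b / a) M
  have g_last := geometricBoundary_last c hr.le hM
  have g_rate := expansionRate_geometricBoundary ha.ne' b c M
  refine ⟨fun h h_zero h_last => ?_, g_zero, g_last, strictMono_geometricBoundary hc hr hM, g_rate⟩
  rw [← g_zero] at h_zero
  replace h_last := h_last.trans g_last.symm
  exact ⟨le_sup'_expansionRate ha hb hM h_zero h_last fun l _ => g_rate l,
    sup'_expansionRate_eq_iff ha hb hM h_zero h_last fun l _ => g_rate l⟩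

/-- Lemma 3 (even number of levels N = 2M): optimality of the nonuniform quantizer `h*`.
For every admissible boundary sequence, the maximal expansion rate is at least
`ε/(1 - r^M)`, with equality exactly for `h*`; moreover `h*` is admissible and all of its
expansion rates equal `ε/(1 - r^M)`. -/
theorem stmt_4 (A ε : ℝ) (hε : 0 < ε) (hA : 1 < A - ε) (M : ℕ) (hM : 1 ≤ M)
    (r : ℝ) (hr : r = (A - ε) / (A + ε))
    (hstar : ℕ → ℝ) (hhstar : ∀ l, hstar l = (1 / 2) * (1 - r ^ l) / (1 - r ^ M)) :
    (∀ h : ℕ → ℝ, h 0 = 0 → h M = 1 / 2 → (∀ l < M, h l < h (l + 1)) →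
      (ε / (1 - r ^ M) ≤
          Finset.sup' (Finset.range M) (Finset.nonempty_range_iff.mpr (by omega))
            (fun l => (A + ε) * h (l + 1) - (A - ε) * h l) ∧
        (Finset.sup' (Finset.range M) (Finset.nonempty_range_iff.mpr (by omega))
            (fun l => (A + ε) * h (l + 1) - (A - ε) * h l) = ε / (1 - r ^ M) ↔
          ∀ l ≤ M, h l = hstar l))) ∧
    hstar 0 = 0 ∧ hstar M = 1 / 2 ∧ (∀ l < M, hstar l < hstar (l + 1)) ∧
    (∀ l < M, (A + ε) * hstar (l + 1) - (A - ε) * hstar l = ε / (1 - r ^ M)) := by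
  have ha : 0 < A + ε := by linarith
  have hb : 0 < A - ε := by linarith
  have hab : A - ε < A + ε := by linarith
  have hr1 : r ≠ 1 := hr ▸ ((div_lt_one ha).mpr hab).ne
  obtain rfl : hstar = geometricBoundary (1 / 2) r M :=
    funext fun l => (hhstar l).trans (geometricBoundary_eq_of_ne_one _ hr1 M l).symm
  have hrate : ε / (1 - r ^ M) = (A + ε) * (1 / 2) / ∑ i ∈ range M, r ^ i := by
    rw [hr, mul_div_geom_sum_div_of_ne ha.ne' hab.ne]
    ring
  rw [hrate, hr]
  obtain ⟨optimal, g_zero, g_last, g_mono, g_rate⟩ :=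
    stmt_4_general ha hb (one_half_pos (α := ℝ)) (M := M) (by lia)
  exact ⟨fun h h_zero h_last _ => optimal h h_zero h_last, g_zero, g_last,
    fun l _ => g_mono l.lt_succ_self, fun l _ => g_rate l⟩
end

section
/- Let A, ε ∈ ℝ with ε > 0 and A − ε > 1, set r = (A−ε)/(A+ε), let M ≥ 1 be an integer, and let N = 2M. There exists a strictly increasing sequence h_0 = 0 < h_1 < ⋯ < h_M = 1/2 of reals satisfying (A+ε)·h_{l+1} − (A−ε)·h_l < 1 for every l = 0,…,M−1 if and only if ε < 1 and N > log((1−ε)²)/log r. -/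
/-!
In terms of `r = (A - ε) / (A + ε)`, expansion rates below `1` mean that
`h (l + 1) < r * h l + 1 / (A + ε)`. Iterating from `h 0 = 0` bounds `h M` strictly by
`(1 + r + ⋯ + r ^ (M - 1)) / (A + ε) = (1 - r ^ M) / (2 * ε)`, and rescaling the partial sums of
the geometric series, whose expansion rates are all equal, attains every smaller positive value.
So `1 / 2` is attained exactly when `r ^ M < 1 - ε`.
-/

section AffineRecursion

theorem lt_geom_sum_mul_of_lt_mul_add {R : Type*} [Semiring R] [PartialOrder R]
    [IsOrderedRing R] {r w : R} (hr : 0 ≤ r) {h : ℕ → R} (h_zero : h 0 = 0)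
    {n : ℕ} (hn : n ≠ 0) (h_succ : ∀ l < n, h (l + 1) < r * h l + w) :
    h n < (∑ i ∈ Finset.range n, r ^ i) * w := by
  induction n, Nat.one_le_iff_ne_zero.2 hn using Nat.le_induction with
  | base => simpa [h_zero] using h_succ 0 one_pos
  | succ n one_le_n ih =>
    have h_lt := ih (Nat.one_le_iff_ne_zero.1 one_le_n) fun l hl => h_succ l (hl.trans n.lt_add_one)
    calc h (n + 1) < r * h n + w := h_succ n n.lt_add_one
      _ ≤ r * ((∑ i ∈ Finset.range n, r ^ i) * w) + w := by gcongr
      _ = (∑ i ∈ Finset.range (n + 1), r ^ i) * w := by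
        rw [geom_sum_succ, add_mul, one_mul, mul_assoc]

variable {K : Type*} [Field K] [LinearOrder K] [IsStrictOrderedRing K] {r w d : K} {n : ℕ}

theorem exists_lt_succ_and_lt_mul_add_of_lt_geom_sum_mul (hr : 0 < r) (hd : 0 < d)
    (hdw : d < (∑ i ∈ Finset.range n, r ^ i) * w) :
    ∃ h : ℕ → K, h 0 = 0 ∧ h n = d ∧ (∀ l < n, h l < h (l + 1)) ∧
      ∀ l < n, h (l + 1) < r * h l + w := by
  have hn : n ≠ 0 := by
    rintro rfl
    exact hd.not_gt (by simpa using hdw)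
  let S (l : ℕ) : K := ∑ i ∈ Finset.range l, r ^ i
  have hS : 0 < S n := geom_sum_pos hr.le hn
  refine ⟨fun l => S l * (d / S n), by simp [S], mul_div_cancel₀ d hS.ne', fun l _ => ?_,
    fun l _ => ?_⟩
  · have S_lt_succ : S l < S (l + 1) := by
      simpa only [S, Finset.sum_range_succ] using lt_add_of_pos_right _ (pow_pos hr l)
    exact mul_lt_mul_of_pos_right S_lt_succ (div_pos hd hS)
  · calc S (l + 1) * (d / S n) = r * (S l * (d / S n)) + d / S n := by
          simp only [S, geom_sum_succ]
          ring
      _ < r * (S l * (d / S n)) + w := by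
          gcongr
          exact (div_lt_iff₀' hS).2 hdw

theorem exists_lt_succ_and_lt_mul_add_iff (hr : 0 < r) (hd : 0 < d) :
    (∃ h : ℕ → K, h 0 = 0 ∧ h n = d ∧ (∀ l < n, h l < h (l + 1)) ∧
      ∀ l < n, h (l + 1) < r * h l + w) ↔ d < (∑ i ∈ Finset.range n, r ^ i) * w := by
  refine ⟨?_, exists_lt_succ_and_lt_mul_add_of_lt_geom_sum_mul hr hd⟩
  rintro ⟨h, h_zero, rfl, -, h_succ⟩
  have hn : n ≠ 0 := by
    rintro rfl
    exact hd.ne' h_zero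
  exact lt_geom_sum_mul_of_lt_mul_add hr.le h_zero hn h_succ

end AffineRecursion

theorem pow_lt_iff_pos_and_log_sq_div_log_lt {r x : ℝ} (hr₀ : 0 < r) (hr₁ : r < 1) (n : ℕ) :
    r ^ n < x ↔ 0 < x ∧ Real.log (x ^ 2) / Real.log r < ((2 * n : ℕ) : ℝ) := by
  have iff_of_pos (hx : 0 < x) :
      Real.log (x ^ 2) / Real.log r < ((2 * n : ℕ) : ℝ) ↔ r ^ n < x := by
    rw [Real.log_div_log, Real.logb_lt_iff_lt_rpow_of_base_lt_one hr₀ hr₁ (pow_pos hx 2),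
      Real.rpow_natCast, pow_mul', pow_lt_pow_iff_left₀ (pow_pos hr₀ n).le hx.le two_ne_zero]
  exact ⟨fun h => have hx := (pow_pos hr₀ n).trans h; ⟨hx, (iff_of_pos hx).2 h⟩,
    fun ⟨hx, h⟩ => (iff_of_pos hx).1 h⟩

theorem stmt_7_general (A ε : ℝ) (hε : 0 < ε) (hA : 0 < A - ε) (M : ℕ)
    (r : ℝ) (hr : r = (A - ε) / (A + ε)) (N : ℕ) (hN : N = 2 * M) :
    (∃ h : ℕ → ℝ, h 0 = 0 ∧ h M = 1 / 2 ∧ (∀ l < M, h l < h (l + 1)) ∧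
        ∀ l < M, (A + ε) * h (l + 1) - (A - ε) * h l < 1) ↔
      (ε < 1 ∧ Real.log ((1 - ε) ^ 2) / Real.log r < (N : ℝ)) := by
  have ha : 0 < A + ε := by linarith
  have hr₀ : 0 < r := hr ▸ div_pos hA ha
  have hr₁ : r < 1 := by rw [hr, div_lt_one ha]; linarith
  have rate_lt_one_iff (x y : ℝ) :
      (A + ε) * y - (A - ε) * x < 1 ↔ y < r * x + 1 / (A + ε) := by
    rw [hr, div_mul_eq_mul_div, ← add_div, lt_div_iff₀' ha, sub_lt_iff_lt_add']
  have geom_sum_eq : (∑ i ∈ Finset.range M, r ^ i) * (1 / (A + ε)) = (1 - r ^ M) / (2 * ε) := by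
    have one_sub_r : (1 - r) * (A + ε) = 2 * ε := by rw [hr]; field_simp; ring
    rw [← mul_neg_geom_sum, ← one_sub_r]
    have : 1 - r ≠ 0 := (sub_pos.2 hr₁).ne'
    field_simp
  have half_lt_iff : 1 / 2 < (1 - r ^ M) / (2 * ε) ↔ r ^ M < 1 - ε := by
    rw [div_lt_div_iff₀ two_pos (by positivity)]
    constructor <;> intro <;> linarith
  simp only [rate_lt_one_iff]
  rw [exists_lt_succ_and_lt_mul_add_iff hr₀ one_half_pos, geom_sum_eq, half_lt_iff,
    pow_lt_iff_pos_and_log_sq_div_log_lt hr₀ hr₁, sub_pos, hN]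

/-- Combined core of Theorem 1 and Corollary 1 (even N = 2M): a quantizer with all
expansion rates below 1 exists iff `ε < 1` and `N` exceeds the threshold
`log((1−ε)²)/log r`. -/
theorem stmt_7 (A ε : ℝ) (hε : 0 < ε) (hA : 1 < A - ε) (M : ℕ) (hM : 1 ≤ M)
    (r : ℝ) (hr : r = (A - ε) / (A + ε)) (N : ℕ) (hN : N = 2 * M) :
    (∃ h : ℕ → ℝ, h 0 = 0 ∧ h M = 1 / 2 ∧ (∀ l < M, h l < h (l + 1)) ∧
        ∀ l < M, (A + ε) * h (l + 1) - (A - ε) * h l < 1) ↔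
      (ε < 1 ∧ Real.log ((1 - ε) ^ 2) / Real.log r < (N : ℝ)) :=
  stmt_7_general A ε hε (one_pos.trans hA) M r hr N hN
end

section
/- Let A, ε ∈ ℝ with ε > 0 and A − ε > 1, set r = (A−ε)/(A+ε), let M ≥ 1 be an integer, and let N = 2M − 1. If there exists a strictly increasing sequence h_0 = 0 < h_1 < ⋯ < h_M = 1/2 of reals satisfying 2(A+ε)·h_1 < 1 and (A+ε)·h_{l+1} − (A−ε)·h_l < 1 for every l = 1,…,M−1, then ε < 1 and N > log((1−ε)²)/log r. -/
/-!
For `w = (A + ε) y - (A - ε) x` and `r = (A - ε) / (A + ε)` one has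
`(1 - 2 ε y) - r (1 - 2 ε x) = 2 ε (1 - w) / (A + ε)`. Rates below `1` therefore mean that
`1 - 2 ε h_l` shrinks by a factor larger than `r` at every step, and the middle cell gives the
initial value `1 - 2 ε h_1 > (1 + r) / 2`. At `h_M = 1 / 2` this reads
`r ^ (M - 1) (1 + r) / 2 < 1 - ε`. Since `√r ≤ (1 + r) / 2`, squaring yields
`r ^ (2 M - 1) < (1 - ε) ^ 2`.
-/

section Rates

variable {A ε : ℝ}

lemma ratio_mul_one_sub_lt_one_sub_iff (hε : 0 < ε) (hb : 0 < A + ε) {x y : ℝ} :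
    (A - ε) / (A + ε) * (1 - 2 * ε * x) < 1 - 2 * ε * y ↔ (A + ε) * y - (A - ε) * x < 1 := by
  have gap : (A + ε) * (1 - 2 * ε * y) - (A - ε) * (1 - 2 * ε * x) =
      2 * ε * (1 - ((A + ε) * y - (A - ε) * x)) := by ring
  rw [div_mul_eq_mul_div, div_lt_iff₀' hb, ← sub_pos, gap, mul_pos_iff_of_pos_left (by positivity),
    sub_pos]

lemma one_add_ratio_div_two_lt_one_sub_iff (hε : 0 < ε) (hb : 0 < A + ε) {x : ℝ} :
    (1 + (A - ε) / (A + ε)) / 2 < 1 - 2 * ε * x ↔ 2 * (A + ε) * x < 1 := by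
  have mean : (1 + (A - ε) / (A + ε)) / 2 = A / (A + ε) := by field_simp; ring
  have gap : (A + ε) * (1 - 2 * ε * x) - A = ε * (1 - 2 * (A + ε) * x) := by ring
  rw [mean, div_lt_iff₀' hb, ← sub_pos, gap, mul_pos_iff_of_pos_left hε, sub_pos]

lemma ratio_pow_mul_lt_one_sub_of_rates_lt_one (hε : 0 < ε) (ha : 0 < A - ε) {h : ℕ → ℝ} {k : ℕ}
    (hw0 : 2 * (A + ε) * h 1 < 1)
    (hwl : ∀ l < k, (A + ε) * h (l + 2) - (A - ε) * h (l + 1) < 1) :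
    ((A - ε) / (A + ε)) ^ k * ((1 + (A - ε) / (A + ε)) / 2) < 1 - 2 * ε * h (k + 1) := by
  have hb : 0 < A + ε := by linarith
  have hr : 0 < (A - ε) / (A + ε) := div_pos ha hb
  calc ((A - ε) / (A + ε)) ^ k * ((1 + (A - ε) / (A + ε)) / 2)
      < ((A - ε) / (A + ε)) ^ k * (1 - 2 * ε * h 1) := by
        gcongr
        exact (one_add_ratio_div_two_lt_one_sub_iff hε hb).2 hw0
    _ ≤ 1 - 2 * ε * h (k + 1) :=
        geom_le (u := fun l ↦ 1 - 2 * ε * h (l + 1)) hr.le k fun l hl ↦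
          ((ratio_mul_one_sub_lt_one_sub_iff hε hb).2 (hwl l hl)).le

end Rates

lemma pow_two_mul_add_one_le_sq_pow_mul_mean (r : ℝ) (k : ℕ) :
    r ^ (2 * k + 1) ≤ (r ^ k * ((1 + r) / 2)) ^ 2 := by
  have am_gm : r ≤ ((1 + r) / 2) ^ 2 := by linarith [sq_nonneg (1 - r)]
  calc r ^ (2 * k + 1) = (r ^ k) ^ 2 * r := by ring
    _ ≤ (r ^ k) ^ 2 * ((1 + r) / 2) ^ 2 := by gcongr
    _ = (r ^ k * ((1 + r) / 2)) ^ 2 := by ring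

theorem stmt_8_general {A ε : ℝ} (hε : 0 < ε) (hA : 0 < A - ε) {M : ℕ} (hM : 1 ≤ M)
    {h : ℕ → ℝ} (hMval : 1 / 2 ≤ h M) (hw0 : 2 * (A + ε) * h 1 < 1)
    (hwl : ∀ l, 1 ≤ l → l < M → (A + ε) * h (l + 1) - (A - ε) * h l < 1) :
    ε < 1 ∧ Real.log ((1 - ε) ^ 2) / Real.log ((A - ε) / (A + ε)) < (2 * M - 1 : ℕ) := by
  obtain ⟨k, rfl⟩ := Nat.exists_eq_add_of_le' hM
  have hlast := ratio_pow_mul_lt_one_sub_of_rates_lt_one (k := k) hε hA hw0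
    fun l hl ↦ hwl (l + 1) (by lia) (by lia)
  have hb : 0 < A + ε := by linarith
  have hr1 : (A - ε) / (A + ε) < 1 := (div_lt_one hb).2 (by linarith)
  have hr0 : 0 < (A - ε) / (A + ε) := div_pos hA hb
  set r := (A - ε) / (A + ε)
  have hlt : r ^ k * ((1 + r) / 2) < 1 - ε := by
    linarith [mul_le_mul_of_nonneg_left hMval hε.le]
  have hpos : 0 < r ^ k * ((1 + r) / 2) := by positivity
  have hε1 : 0 < 1 - ε := hpos.trans hlt
  refine ⟨sub_pos.1 hε1, ?_⟩
  rw [Real.log_div_log, Real.logb_lt_iff_lt_rpow_of_base_lt_one hr0 hr1 (by positivity),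
    Real.rpow_natCast]
  calc r ^ (2 * k + 1) ≤ (r ^ k * ((1 + r) / 2)) ^ 2 := pow_two_mul_add_one_le_sq_pow_mul_mean r k
    _ < (1 - ε) ^ 2 := by gcongr

/-- Odd-N case of the necessity part of Theorem 1: if a quantizer with `N = 2M − 1`
levels has all expansion rates below 1, then `ε < 1` and `N` exceeds the threshold
`log((1−ε)²)/log r`. -/
theorem stmt_8 (A ε : ℝ) (hε : 0 < ε) (hA : 1 < A - ε) (M : ℕ) (hM : 1 ≤ M)
    (r : ℝ) (hr : r = (A - ε) / (A + ε)) (N : ℕ) (hN : N = 2 * M - 1)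
    (h : ℕ → ℝ) (h0 : h 0 = 0) (hMval : h M = 1 / 2)
    (hmono : ∀ l < M, h l < h (l + 1))
    (hw0 : 2 * (A + ε) * h 1 < 1)
    (hwl : ∀ l, 1 ≤ l → l < M → (A + ε) * h (l + 1) - (A - ε) * h l < 1) :
    ε < 1 ∧ Real.log ((1 - ε) ^ 2) / Real.log r < (N : ℝ) := by
  subst hr hN
  exact stmt_8_general hε (by linarith) hM hMval.ge hw0 hwl
end

section
/- Define N̄(A, ε) = log((1−ε)²)/log((A−ε)/(A+ε)) for reals A, ε with 0 < ε < 1 and A − ε > 1. Then: (i) for every fixed ε ∈ (0,1), the function A ↦ N̄(A, ε) is strictly increasing on (1+ε, ∞); (ii) for every fixed A > 1, the function ε ↦ N̄(A, ε) is strictly increasing on the interval (0, min(1, A−1)). -/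
/-!
For `|ε| < A` one has `log ((A - ε) / (A + ε)) = -2 artanh (ε / A)`, so the threshold is
`N̄(A, ε) = -log (1 - ε) / artanh (ε / A)`. Only the denominator depends on `A`, and it decreases.
As functions of `ε`, numerator and denominator both vanish at `0`, and the quotient of their
derivatives, `A⁻¹ (A² - ε²) / (1 - ε)`, is strictly increasing for `A ≥ 1`; by the monotone form of
l'Hôpital's rule so is `N̄(A, ·)`.
-/

section

open Set Real

lemma exists_hasDerivAt_div_eq_sub_div_sub {f g f' g' : ℝ → ℝ} {a b : ℝ} (hab : a < b)
    (hfc : ContinuousOn f (Icc a b)) (hf : ∀ x ∈ Ioo a b, HasDerivAt f (f' x) x)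
    (hgc : ContinuousOn g (Icc a b)) (hg : ∀ x ∈ Ioo a b, HasDerivAt g (g' x) x)
    (hg' : ∀ x ∈ Ioo a b, g' x ≠ 0) :
    ∃ c ∈ Ioo a b, f' c / g' c = (f b - f a) / (g b - g a) := by
  have hgab : g b - g a ≠ 0 := fun h =>
    have ⟨c, hc, hgc'⟩ := exists_hasDerivAt_eq_zero hab hgc (sub_eq_zero.1 h).symm hg
    hg' c hc hgc'
  obtain ⟨c, hc, hratio⟩ := exists_ratio_hasDerivAt_eq_ratio_slope f f' hab hfc hf g g' hgc hg
  exact ⟨c, hc, (div_eq_div_iff (hg' c hc) hgab).2 (by rw [mul_comm, hratio])⟩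

lemma strictMonoOn_sub_div_sub_of_strictMonoOn_deriv_div {D : Set ℝ} (hD : Convex ℝ D)
    {f g f' g' : ℝ → ℝ}
    (hfc : ContinuousOn f D) (hf : ∀ x ∈ interior D, HasDerivAt f (f' x) x)
    (hgc : ContinuousOn g D) (hg : ∀ x ∈ interior D, HasDerivAt g (g' x) x)
    (hg' : ∀ x ∈ interior D, 0 < g' x)
    (hmono : StrictMonoOn (fun x => f' x / g' x) (interior D)) {a : ℝ} (ha : a ∈ D) :
    StrictMonoOn (fun x => (f x - f a) / (g x - g a)) (D ∩ Ioi a) := by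
  have hg_mono : StrictMonoOn g D :=
    strictMonoOn_of_hasDerivWithinAt_pos hD hgc (fun x hx => (hg x hx).hasDerivWithinAt) hg'
  have cauchy {x y : ℝ} (hx : x ∈ D) (hy : y ∈ D) (hxy : x < y) :
      ∃ c ∈ Ioo x y, c ∈ interior D ∧ f' c / g' c = (f y - f x) / (g y - g x) := by
    have hIcc : Icc x y ⊆ D := hD.ordConnected.out hx hy
    have hIoo : Ioo x y ⊆ interior D :=
      interior_maximal (Ioo_subset_Icc_self.trans hIcc) isOpen_Ioo
    obtain ⟨c, hc, hratio⟩ := exists_hasDerivAt_div_eq_sub_div_sub hxy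
      (hfc.mono hIcc) (fun t ht => hf t (hIoo ht)) (hgc.mono hIcc) (fun t ht => hg t (hIoo ht))
      (fun t ht => (hg' t (hIoo ht)).ne')
    exact ⟨c, hc, hIoo hc, hratio⟩
  rintro x ⟨hx, hax⟩ y ⟨hy, hay⟩ hxy
  have hgax : 0 < g x - g a := sub_pos.2 (hg_mono ha hx hax)
  have hgxy : 0 < g y - g x := sub_pos.2 (hg_mono hx hy hxy)
  have hgay : 0 < g y - g a := sub_pos.2 (hg_mono ha hy hay)
  have adjacent : (f x - f a) / (g x - g a) < (f y - f x) / (g y - g x) := by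
    obtain ⟨c, hc, hcD, hcratio⟩ := cauchy ha hx hax
    obtain ⟨d, hd, hdD, hdratio⟩ := cauchy hx hy hxy
    rw [← hcratio, ← hdratio]
    exact hmono hcD hdD (hc.2.trans hd.1)
  -- The quotient over `[a, y]` is the mediant of the quotients over `[a, x]` and `[x, y]`.
  rw [div_lt_div_iff₀ hgax hgxy] at adjacent
  change (f x - f a) / (g x - g a) < (f y - f a) / (g y - g a)
  rw [div_lt_div_iff₀ hgax hgay]
  linarith

lemma hasDerivAt_artanh {x : ℝ} (hx : x ∈ Ioo (-1) 1) :
    HasDerivAt artanh (1 / (1 - x ^ 2)) x := by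
  have hadd : 0 < 1 + x := by linarith [hx.1]
  have hsub : 0 < 1 - x := by linarith [hx.2]
  have hlog : HasDerivAt (fun y => 1 / 2 * log ((1 + y) / (1 - y))) (1 / (1 - x ^ 2)) x := by
    have hquot := ((hasDerivAt_id x).const_add 1).div ((hasDerivAt_id x).const_sub 1) hsub.ne'
    refine ((hquot.log (div_pos hadd hsub).ne').const_mul (1 / 2)).congr_deriv ?_
    rw [show 1 - x ^ 2 = (1 + x) * (1 - x) by ring]
    simp only [id, Pi.div_apply]
    field_simp
    ring
  refine hlog.congr_of_eventuallyEq ?_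
  filter_upwards [Ioo_mem_nhds hx.1 hx.2] with y hy
  exact artanh_eq_half_log (Ioo_subset_Icc_self hy)

lemma div_mem_Ioo_neg_one_one_of_abs_lt {A ε : ℝ} (h : |ε| < A) : ε / A ∈ Ioo (-1) 1 := by
  have hA : 0 < A := (abs_nonneg ε).trans_lt h
  rw [mem_Ioo, ← abs_lt, abs_div, abs_of_pos hA]
  exact (div_lt_one hA).2 h

lemma hasDerivAt_artanh_div_const {A x : ℝ} (h : |x| < A) :
    HasDerivAt (fun x => artanh (x / A)) (A / (A ^ 2 - x ^ 2)) x := by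
  have hA : A ≠ 0 := ((abs_nonneg x).trans_lt h).ne'
  have hcomp := HasDerivAt.comp (h₂ := artanh) (h := fun x => x / A) x
    (hasDerivAt_artanh (div_mem_Ioo_neg_one_one_of_abs_lt h)) ((hasDerivAt_id x).div_const A)
  refine hcomp.congr_deriv ?_
  rw [div_pow, one_sub_div (pow_ne_zero 2 hA)]
  field_simp

lemma log_sub_div_add_eq_neg_two_mul_artanh {A ε : ℝ} (h : |ε| < A) :
    log ((A - ε) / (A + ε)) = -2 * artanh (ε / A) := by
  have hA : A ≠ 0 := ((abs_nonneg ε).trans_lt h).ne'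
  have hquot : (A - ε) / (A + ε) = ((1 + ε / A) / (1 - ε / A))⁻¹ := by
    rw [inv_div, one_sub_div hA, one_add_div hA, div_div_div_cancel_right₀ hA]
  rw [hquot, log_inv,
    artanh_eq_half_log (Ioo_subset_Icc_self (div_mem_Ioo_neg_one_one_of_abs_lt h))]
  ring

lemma log_one_sub_sq_div_log_sub_div_add {A ε : ℝ} (h : |ε| < A) :
    log ((1 - ε) ^ 2) / log ((A - ε) / (A + ε)) = -log (1 - ε) / artanh (ε / A) := by
  rw [log_sub_div_add_eq_neg_two_mul_artanh h, log_pow, neg_mul, div_neg, neg_div, Nat.cast_ofNat,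
    mul_div_mul_left _ _ two_ne_zero]

lemma strictMonoOn_const_div_artanh_div {c ε : ℝ} (hc : 0 < c) (hε : 0 < ε) :
    StrictMonoOn (fun A => c / artanh (ε / A)) (Ioi ε) := by
  intro A hA B hB hAB
  have hdiv {t : ℝ} (ht : t ∈ Ioi ε) : ε / t ∈ Ioo (-1) 1 :=
    div_mem_Ioo_neg_one_one_of_abs_lt (by rwa [abs_of_pos hε])
  have hB_pos : 0 < ε / B := div_pos hε (hε.trans hB)
  exact div_lt_div_of_pos_left hc (artanh_pos ⟨hB_pos, (hdiv hB).2⟩)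
    (strictMonoOn_artanh (hdiv hB) (hdiv hA) (div_lt_div_of_pos_left hε (hε.trans hA) hAB))

lemma strictMonoOn_sq_sub_sq_div_one_sub {A : ℝ} (hA : 1 ≤ A) :
    StrictMonoOn (fun x => (A ^ 2 - x ^ 2) / (1 - x)) (Iio 1) := by
  have hsplit : EqOn (fun x => (A ^ 2 - 1) / (1 - x) + (1 + x))
      (fun x => (A ^ 2 - x ^ 2) / (1 - x)) (Iio 1) := fun x hx => by
    have : 1 - x ≠ 0 := (sub_pos.2 hx).ne'
    field_simp
    ring
  refine StrictMonoOn.congr (fun x _ y hy hxy => ?_) hsplit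
  have hsq : 0 ≤ A ^ 2 - 1 := sub_nonneg.2 (one_le_pow₀ hA)
  have hy_pos : 0 < 1 - y := sub_pos.2 hy
  exact add_lt_add_of_le_of_lt (by gcongr) (by gcongr)

lemma strictMonoOn_neg_log_one_sub_div_artanh_div {A : ℝ} (hA : 1 ≤ A) :
    StrictMonoOn (fun ε => -log (1 - ε) / artanh (ε / A)) (Ioo 0 1) := by
  have hA_pos : 0 < A := zero_lt_one.trans_le hA
  have habs {x : ℝ} (hx : x ∈ Ico 0 1) : |x| < A := by
    rw [abs_of_nonneg hx.1]
    exact hx.2.trans_le hA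
  have hnum : ∀ x ∈ Ico (0 : ℝ) 1, HasDerivAt (fun x => -log (1 - x)) (1 / (1 - x)) x :=
    fun x hx => (((hasDerivAt_id x).const_sub 1).log (sub_pos.2 hx.2).ne').neg.congr_deriv
      (by simp only [id, neg_div, neg_neg])
  have hden : ∀ x ∈ Ico (0 : ℝ) 1,
      HasDerivAt (fun x => artanh (x / A)) (A / (A ^ 2 - x ^ 2)) x :=
    fun x hx => hasDerivAt_artanh_div_const (habs hx)
  have hden_pos : ∀ x ∈ Ico (0 : ℝ) 1, 0 < A / (A ^ 2 - x ^ 2) := fun x hx =>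
    div_pos hA_pos (sub_pos.2 (sq_lt_sq.2 (by rw [abs_of_pos hA_pos]; exact habs hx)))
  have hratio : StrictMonoOn (fun x => 1 / (1 - x) / (A / (A ^ 2 - x ^ 2))) (Ioo 0 1) := by
    have hscaled := (strictMono_mul_left_of_pos (inv_pos.2 hA_pos)).comp_strictMonoOn
      ((strictMonoOn_sq_sub_sq_div_one_sub hA).mono (Ioo_subset_Iio_self (a := 0)))
    refine hscaled.congr fun x _ => ?_
    simp only [Function.comp_apply, div_eq_mul_inv, mul_inv, inv_inv]
    ring
  have hsecant := strictMonoOn_sub_div_sub_of_strictMonoOn_deriv_div (convex_Ico 0 1)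
    (HasDerivAt.continuousOn hnum) (fun x hx => hnum x (interior_subset hx))
    (HasDerivAt.continuousOn hden) (fun x hx => hden x (interior_subset hx))
    (fun x hx => hden_pos x (interior_subset hx)) (by rwa [interior_Ico])
    (left_mem_Ico.2 zero_lt_one)
  refine (hsecant.mono fun x hx => ⟨Ioo_subset_Ico_self hx, hx.1⟩).congr fun x _ => ?_
  simp only [sub_zero, log_one, neg_zero, zero_div, artanh_zero]

theorem stmt_10_general
    (Nbar : ℝ → ℝ → ℝ)
    (hNbar : ∀ A ε : ℝ, Nbar A ε = log ((1 - ε) ^ 2) / log ((A - ε) / (A + ε))) :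
    (∀ ε ∈ Ioo (0 : ℝ) 2, ε ≠ 1 → StrictMonoOn (fun A => Nbar A ε) (Ioi ε)) ∧
    (∀ A : ℝ, 1 ≤ A → StrictMonoOn (fun ε => Nbar A ε) (Ioo 0 1)) := by
  have hNbar_eq {A ε : ℝ} (hε : 0 < ε) (hA : ε < A) :
      -log (1 - ε) / artanh (ε / A) = Nbar A ε := by
    rw [hNbar, log_one_sub_sq_div_log_sub_div_add (by rwa [abs_of_pos hε])]
  refine ⟨fun ε hε hε1 => ?_, fun A hA => ?_⟩
  · have hlog : log (1 - ε) < 0 := by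
      rw [← log_abs]
      exact log_neg (abs_pos.2 (sub_ne_zero.2 hε1.symm))
        (abs_lt.2 ⟨by linarith [hε.2], by linarith [hε.1]⟩)
    exact (strictMonoOn_const_div_artanh_div (neg_pos.2 hlog) hε.1).congr
      fun A hA => hNbar_eq hε.1 hA
  · exact (strictMonoOn_neg_log_one_sub_div_artanh_div hA).congr
      fun ε hε => hNbar_eq hε.1 (hε.2.trans_le hA)

end

/-- Monotonicity of the threshold `N̄(A, ε) = log((1−ε)²)/log((A−ε)/(A+ε))`:
strictly increasing in the nominal pole product `A` and in the uncertainty radius `ε`. -/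
theorem stmt_10
    (Nbar : ℝ → ℝ → ℝ)
    (hNbar : ∀ A ε : ℝ, Nbar A ε = Real.log ((1 - ε) ^ 2) / Real.log ((A - ε) / (A + ε))) :
    (∀ ε : ℝ, ε ∈ Set.Ioo (0 : ℝ) 1 → StrictMonoOn (fun A => Nbar A ε) (Set.Ioi (1 + ε))) ∧
    (∀ A : ℝ, 1 < A → StrictMonoOn (fun ε => Nbar A ε) (Set.Ioo 0 (min 1 (A - 1)))) := by
  obtain ⟨hpole, hradius⟩ := stmt_10_general Nbar hNbar
  exact ⟨fun ε hε => (hpole ε ⟨hε.1, hε.2.trans one_lt_two⟩ hε.2.ne).mono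
      (Set.Ioi_subset_Ioi (by linarith)),
    fun A hA => (hradius A hA.le).mono (Set.Ioo_subset_Ioo_right (min_le_left 1 (A - 1)))⟩
end

section
/- Let A, ε ∈ ℝ with 0 < ε < 1, A − ε > 1, and 1 − ε(2A + 2ε + 1) > 0. Then log((1−ε)²)/log((A−ε)/(A+ε)) < (A − ε(A+ε))/(1 − ε(2A + 2ε + 1)). -/
/-!
The bounds `1 - y⁻¹ ≤ log y` and `log x ≤ x - 1`, taken at `y = 1 - ε` and
`x = (A - ε) / (A + ε)`, bound the ratio of logarithms by `(A + ε) / (1 - ε)`.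
Cross-multiplying, and writing `a = A + ε` for the largest gain of the plant, the gap between
this rational bound and the right-hand side has the sign of
`ε * ((2 * a + 1) * (a - 1) + ε * (a + 1))`, which is positive once `1 ≤ a`.
-/

theorem log_div_log_le_inv_sub_one_div_one_sub {x y : ℝ} (hx0 : 0 < x) (hx1 : x < 1)
    (hy0 : 0 < y) (hy1 : y ≤ 1) :
    Real.log y / Real.log x ≤ (y⁻¹ - 1) / (1 - x) := by
  have log_y_bound : -Real.log y ≤ y⁻¹ - 1 := by
    linarith [Real.one_sub_inv_le_log_of_pos hy0]
  have log_x_bound : 1 - x ≤ -Real.log x := by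
    linarith [Real.log_le_sub_one_of_pos hx0]
  have inv_sub_one_nonneg : 0 ≤ y⁻¹ - 1 := sub_nonneg.2 ((one_le_inv₀ hy0).2 hy1)
  rw [← neg_div_neg_eq]
  exact div_le_div₀ inv_sub_one_nonneg log_y_bound (sub_pos.2 hx1) log_x_bound

theorem log_one_sub_sq_div_log_le {A ε : ℝ} (hε0 : 0 < ε) (hε1 : ε < 1) (hεA : ε < A) :
    Real.log ((1 - ε) ^ 2) / Real.log ((A - ε) / (A + ε)) ≤ (A + ε) / (1 - ε) := by
  have one_sub_pos : 0 < 1 - ε := sub_pos.2 hε1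
  have gain_pos : 0 < A + ε := by linarith
  have ratio_pos : 0 < (A - ε) / (A + ε) := div_pos (sub_pos.2 hεA) gain_pos
  have ratio_lt_one : (A - ε) / (A + ε) < 1 := (div_lt_one gain_pos).2 (by linarith)
  have inv_sub_one : (1 - ε)⁻¹ - 1 = ε / (1 - ε) := by
    field_simp
    ring
  have one_sub_ratio : 1 - (A - ε) / (A + ε) = 2 * ε / (A + ε) := by
    field_simp
    ring
  calc Real.log ((1 - ε) ^ 2) / Real.log ((A - ε) / (A + ε))
      = 2 * (Real.log (1 - ε) / Real.log ((A - ε) / (A + ε))) := by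
        rw [Real.log_pow, Nat.cast_ofNat, mul_div_assoc]
    _ ≤ 2 * (((1 - ε)⁻¹ - 1) / (1 - (A - ε) / (A + ε))) :=
        mul_le_mul_of_nonneg_left
          (log_div_log_le_inv_sub_one_div_one_sub ratio_pos ratio_lt_one one_sub_pos
            (sub_le_self 1 hε0.le))
          zero_le_two
    _ = (A + ε) / (1 - ε) := by
        rw [inv_sub_one, one_sub_ratio]
        field_simp

theorem lt_one_third_of_one_le_add {A ε : ℝ} (hε : 0 < ε) (hgain : 1 ≤ A + ε)
    (hden : 0 < 1 - ε * (2 * A + 2 * ε + 1)) : ε < 1 / 3 := by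
  have : ε * 3 ≤ ε * (2 * A + 2 * ε + 1) :=
    mul_le_mul_of_nonneg_left (by linarith) hε.le
  linarith

theorem add_div_one_sub_lt_sub_mul_add_div {A ε : ℝ} (hε : 0 < ε) (hgain : 1 ≤ A + ε)
    (hden : 0 < 1 - ε * (2 * A + 2 * ε + 1)) :
    (A + ε) / (1 - ε) < (A - ε * (A + ε)) / (1 - ε * (2 * A + 2 * ε + 1)) := by
  have one_sub_pos : 0 < 1 - ε := by linarith [lt_one_third_of_one_le_add hε hgain hden]
  have gap_pos :
      0 < ε * ((2 * (A + ε) + 1) * (A + ε - 1) + ε * (A + ε + 1)) := by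
    have : 0 ≤ A + ε - 1 := sub_nonneg.2 hgain
    have : 0 < A + ε := by linarith
    positivity
  have cross_gap :
      (A - ε * (A + ε)) * (1 - ε) - (A + ε) * (1 - ε * (2 * A + 2 * ε + 1)) =
        ε * ((2 * (A + ε) + 1) * (A + ε - 1) + ε * (A + ε + 1)) := by
    ring
  rw [div_lt_div_iff₀ one_sub_pos hden, ← sub_pos, cross_gap]
  exact gap_pos

theorem stmt_14_general {A ε : ℝ} (hε : 0 < ε) (hgain : 1 ≤ A + ε)
    (hden : 0 < 1 - ε * (2 * A + 2 * ε + 1)) :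
    Real.log ((1 - ε) ^ 2) / Real.log ((A - ε) / (A + ε)) <
      (A - ε * (A + ε)) / (1 - ε * (2 * A + 2 * ε + 1)) := by
  have hε_third : ε < 1 / 3 := lt_one_third_of_one_le_add hε hgain hden
  calc Real.log ((1 - ε) ^ 2) / Real.log ((A - ε) / (A + ε))
      ≤ (A + ε) / (1 - ε) := log_one_sub_sq_div_log_le hε (by linarith) (by linarith)
    _ < (A - ε * (A + ε)) / (1 - ε * (2 * A + 2 * ε + 1)) :=
        add_div_one_sub_lt_sub_mul_add_div hε hgain hden

/-- The tight scalar threshold `N̄ = 2^{R_nec}` is strictly smaller than the exponential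
of the sufficient bound of Phat et al. -/
theorem stmt_14 (A ε : ℝ) (hε0 : 0 < ε) (hε1 : ε < 1) (hA : 1 < A - ε)
    (hden : 0 < 1 - ε * (2 * A + 2 * ε + 1)) :
    Real.log ((1 - ε) ^ 2) / Real.log ((A - ε) / (A + ε)) <
      (A - ε * (A + ε)) / (1 - ε * (2 * A + 2 * ε + 1)) :=
  stmt_14_general hε0 (by linarith) hden
end

section
/- Let v : ℕ → ℝ be a sequence with v_j > 0 for all j, and suppose the partial products ∏_{j=0}^{k−1} v_j tend to 0 as k → ∞. Then there exists a strictly increasing function φ : ℕ → ℕ with φ(0) = 0 such that for every i, the product ∏_{j=φ(i)}^{φ(i+1)−1} v_j < 1. -/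
/-!
Since `∏ j ∈ Ico m n, v j = (∏ j ∈ range n, v j) / ∏ j ∈ range m, v j`, once `m` is fixed the block
product is a constant multiple of the `n`-th partial product, so it is close to `0` for arbitrarily
large `n`. Each block can thus be closed at such an `n > m`, and the next one opened there.
-/

open Filter Finset Topology

theorem exists_strictMono_forall_rel_succ {α : Type*} [Preorder α] {r : α → α → Prop}
    (h : ∀ a, ∃ b, a < b ∧ r a b) (a : α) :
    ∃ φ : ℕ → α, StrictMono φ ∧ φ 0 = a ∧ ∀ i, r (φ i) (φ (i + 1)) := by
  choose next lt_next rel_next using h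
  have succ_eq (i : ℕ) : next^[i + 1] a = next (next^[i] a) := Function.iterate_succ_apply' next i a
  refine ⟨fun i ↦ next^[i] a, strictMono_nat_of_lt_succ fun i ↦ ?_, rfl, fun i ↦ ?_⟩
  · simpa only [succ_eq] using lt_next (next^[i] a)
  · simpa only [succ_eq] using rel_next (next^[i] a)

section CommGroupWithZero

variable {G₀ : Type*} [CommGroupWithZero G₀] {v : ℕ → G₀}

theorem prod_Ico_eq_prod_range_div_prod_range {m n : ℕ} (hv : ∀ j < m, v j ≠ 0) (hmn : m ≤ n) :
    ∏ j ∈ Ico m n, v j = (∏ j ∈ range n, v j) / ∏ j ∈ range m, v j := by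
  have prod_ne_zero : ∏ j ∈ range m, v j ≠ 0 :=
    prod_ne_zero_iff.mpr fun j hj ↦ hv j (mem_range.mp hj)
  exact eq_div_of_mul_eq prod_ne_zero (by rw [mul_comm, prod_range_mul_prod_Ico v hmn])

variable [TopologicalSpace G₀] [SeparatelyContinuousMul G₀]

theorem mapClusterPt_zero_prod_Ico {m : ℕ} (hv : ∀ j < m, v j ≠ 0)
    (hprod : MapClusterPt 0 atTop fun n ↦ ∏ j ∈ range n, v j) :
    MapClusterPt 0 atTop fun n ↦ ∏ j ∈ Ico m n, v j := by
  have div_tendsto : Tendsto (· / ∏ j ∈ range m, v j) (𝓝 0) (𝓝 0) := by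
    simpa only [div_eq_mul_inv, zero_mul] using
      (continuous_mul_const (∏ j ∈ range m, v j)⁻¹).tendsto 0
  have prod_Ico_eventuallyEq : (fun n ↦ ∏ j ∈ Ico m n, v j) =ᶠ[atTop]
      fun n ↦ (∏ j ∈ range n, v j) / ∏ j ∈ range m, v j :=
    (eventually_ge_atTop m).mono fun _ ↦ prod_Ico_eq_prod_range_div_prod_range hv
  exact prod_Ico_eventuallyEq.mapClusterPt_iff.mpr (hprod.tendsto_comp div_tendsto)

theorem stmt_17_general (hv : ∀ j, v j ≠ 0)
    (hprod : MapClusterPt 0 atTop fun k ↦ ∏ j ∈ range k, v j) {U : Set G₀} (hU : U ∈ 𝓝 0) :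
    ∃ φ : ℕ → ℕ, StrictMono φ ∧ φ 0 = 0 ∧ ∀ i, ∏ j ∈ Ico (φ i) (φ (i + 1)), v j ∈ U := by
  refine exists_strictMono_forall_rel_succ (r := fun m n ↦ ∏ j ∈ Ico m n, v j ∈ U) (fun m ↦ ?_) 0
  have prod_frequently_mem : ∃ᶠ n in atTop, ∏ j ∈ Ico m n, v j ∈ U :=
    (mapClusterPt_zero_prod_Ico (fun j _ ↦ hv j) hprod).frequently hU
  exact ((eventually_gt_atTop m).and_frequently prod_frequently_mem).exists

end CommGroupWithZero

/-- Combinatorial core of Lemma 4: if the partial products of a positive sequence tend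
to 0, then time can be partitioned into consecutive blocks over each of which the product
is strictly less than 1. -/
theorem stmt_17 (v : ℕ → ℝ) (hv : ∀ j, 0 < v j)
    (hprod : Filter.Tendsto (fun k => ∏ j ∈ Finset.range k, v j) Filter.atTop (nhds 0)) :
    ∃ φ : ℕ → ℕ, StrictMono φ ∧ φ 0 = 0 ∧
      ∀ i, ∏ j ∈ Finset.Ico (φ i) (φ (i + 1)), v j < 1 :=
  stmt_17_general (fun j ↦ (hv j).ne') hprod.mapClusterPt (Iio_mem_nhds one_pos)
end

section
/- Let m ≥ 1 be an integer and let A, ε ∈ ℝ with 0 < ε < 1 and A − ε > 1; set r = (A−ε)/(A+ε) and N̄ = log((1−ε)²)/log r. Let x_0,…,x_{m−1} be positive reals satisfying ∏_{j=0}^{m−1} ε/(1 − r^{x_j/2}) ≤ 1 (where r^{x_j/2} denotes the real power). Then ∏_{j=0}^{m−1} x_j ≥ N̄^m. -/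
/-!
Taking logarithms, the block constraint and the conclusion become statements about averages of
`log (1 - r ^ (x / 2))` and of `log x`. They are linked by Jensen's inequality: up to a translation
of `s = log x`, the first is the function `s ↦ log (1 - exp (-exp s))`, which is concave because its
derivative at `s = log t` is `t / (exp t - 1)`, the inverse of the secant slope of the convex
function `exp` between `0` and `t`.
-/

open Real Finset

theorem monotoneOn_exp_sub_one_div : MonotoneOn (fun t : ℝ => (exp t - 1) / t) (Set.Ioi 0) := by
  intro u hu v hv huv
  simpa only [exp_zero, sub_zero] using
    convexOn_exp.secant_mono (Set.mem_univ 0) (Set.mem_univ u) (Set.mem_univ v)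
      (ne_of_gt hu) (ne_of_gt hv) huv

theorem one_sub_exp_neg_pos {t : ℝ} (ht : 0 < t) : 0 < 1 - exp (-t) :=
  sub_pos.2 (exp_lt_one_iff.2 (neg_neg_of_pos ht))

theorem hasDerivAt_log_one_sub_exp_neg_exp (s : ℝ) :
    HasDerivAt (fun s => log (1 - exp (-exp s))) ((exp (exp s) - 1) / exp s)⁻¹ s := by
  have h_pos := one_sub_exp_neg_pos (exp_pos s)
  refine (((hasDerivAt_exp s).neg.exp.const_sub 1).log h_pos.ne').congr_deriv ?_
  have h_ne : exp (exp s) - 1 ≠ 0 := (sub_pos.2 (one_lt_exp_iff.2 (exp_pos s))).ne'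
  simp only [Pi.neg_apply, Real.exp_neg]
  field_simp

theorem concaveOn_log_one_sub_exp_neg_exp :
    ConcaveOn ℝ Set.univ fun s : ℝ => log (1 - exp (-exp s)) := by
  have h_deriv := hasDerivAt_log_one_sub_exp_neg_exp
  refine Antitone.concaveOn_univ_of_deriv (fun s => (h_deriv s).differentiableAt) ?_
  intro s t hst
  rw [(h_deriv s).deriv, (h_deriv t).deriv]
  have h_slope_pos : 0 < (exp (exp s) - 1) / exp s :=
    div_pos (sub_pos.2 (one_lt_exp_iff.2 (exp_pos s))) (exp_pos s)
  exact inv_anti₀ h_slope_pos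
    (monotoneOn_exp_sub_one_div (exp_pos s) (exp_pos t) (exp_le_exp.2 hst))

section Finset

variable {ι : Type*} {s : Finset ι} {x : ι → ℝ}

theorem prod_rpow_eq_exp_sum_mul_log (w : ι → ℝ) (hx : ∀ i ∈ s, 0 < x i) :
    ∏ i ∈ s, x i ^ w i = exp (∑ i ∈ s, w i * log (x i)) := by
  rw [exp_sum]
  exact prod_congr rfl fun i hi => by rw [rpow_def_of_pos (hx i hi), mul_comm]

theorem prod_one_sub_exp_neg_rpow_le {w : ι → ℝ} (hw : ∀ i ∈ s, 0 ≤ w i)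
    (hw_sum : ∑ i ∈ s, w i = 1) (hx : ∀ i ∈ s, 0 < x i) :
    ∏ i ∈ s, (1 - exp (-x i)) ^ w i ≤ 1 - exp (-∏ i ∈ s, x i ^ w i) := by
  have jensen : ∑ i ∈ s, w i * log (1 - exp (-exp (log (x i)))) ≤
      log (1 - exp (-exp (∑ i ∈ s, w i * log (x i)))) :=
    concaveOn_log_one_sub_exp_neg_exp.le_map_sum hw hw_sum fun i _ => Set.mem_univ (log (x i))
  calc ∏ i ∈ s, (1 - exp (-x i)) ^ w i
      = exp (∑ i ∈ s, w i * log (1 - exp (-x i))) :=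
        prod_rpow_eq_exp_sum_mul_log w fun i hi => one_sub_exp_neg_pos (hx i hi)
    _ = exp (∑ i ∈ s, w i * log (1 - exp (-exp (log (x i))))) := by
        congr 1
        exact sum_congr rfl fun i hi => by rw [exp_log (hx i hi)]
    _ ≤ 1 - exp (-exp (∑ i ∈ s, w i * log (x i))) :=
        (le_log_iff_exp_le (one_sub_exp_neg_pos (exp_pos _))).1 jensen
    _ = 1 - exp (-∏ i ∈ s, x i ^ w i) := by rw [prod_rpow_eq_exp_sum_mul_log w hx]

theorem neg_log_one_sub_pow_card_le_prod {ε : ℝ} (hε0 : 0 ≤ ε) (hε1 : ε < 1)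
    (hx : ∀ i ∈ s, 0 < x i) (h : ε ^ #s ≤ ∏ i ∈ s, (1 - exp (-x i))) :
    (-log (1 - ε)) ^ #s ≤ ∏ i ∈ s, x i := by
  rcases s.eq_empty_or_nonempty with rfl | hs
  · simp
  have h_card : #s ≠ 0 := hs.card_ne_zero
  have h_prod : 0 ≤ ∏ i ∈ s, x i := prod_nonneg fun i hi => (hx i hi).le
  set G := (∏ i ∈ s, x i) ^ (#s : ℝ)⁻¹
  have h_mean : ε ≤ 1 - exp (-G) := calc
    ε = (ε ^ #s) ^ (#s : ℝ)⁻¹ := (pow_rpow_inv_natCast hε0 h_card).symm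
    _ ≤ (∏ i ∈ s, (1 - exp (-x i))) ^ (#s : ℝ)⁻¹ := by gcongr
    _ = ∏ i ∈ s, (1 - exp (-x i)) ^ (#s : ℝ)⁻¹ :=
        (finsetProd_rpow s _ (fun i hi => (one_sub_exp_neg_pos (hx i hi)).le) _).symm
    _ ≤ 1 - exp (-∏ i ∈ s, x i ^ (#s : ℝ)⁻¹) :=
        prod_one_sub_exp_neg_rpow_le (fun _ _ => by positivity) (by simp [h_card]) hx
    _ = 1 - exp (-G) := by rw [finsetProd_rpow s x fun i hi => (hx i hi).le]
  have h_log : -log (1 - ε) ≤ G :=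
    neg_le.1 ((le_log_iff_exp_le (sub_pos.2 hε1)).2 (le_sub_comm.1 h_mean))
  have h_log_nonneg : 0 ≤ -log (1 - ε) :=
    neg_nonneg.2 (log_nonpos (sub_nonneg.2 hε1.le) (sub_le_self 1 hε0))
  calc (-log (1 - ε)) ^ #s ≤ G ^ #s := by gcongr
    _ = ∏ i ∈ s, x i := rpow_inv_natCast_pow h_prod h_card

theorem stmt_18_general {ε r : ℝ} (hε0 : 0 ≤ ε) (hε1 : ε < 1) (hr0 : 0 < r) (hr1 : r < 1)
    (hx : ∀ i ∈ s, 0 < x i) (hcon : ∏ i ∈ s, ε / (1 - r ^ (x i / 2)) ≤ 1) :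
    (log ((1 - ε) ^ 2) / log r) ^ #s ≤ ∏ i ∈ s, x i := by
  obtain ⟨c, hc⟩ : ∃ c, c = -log r / 2 := ⟨_, rfl⟩
  have hc_pos : 0 < c := by linarith [log_neg hr0 hr1]
  have h_rpow (i : ι) : r ^ (x i / 2) = exp (-(c * x i)) := by
    rw [rpow_def_of_pos hr0, hc]
    ring_nf
  have hcx (i : ι) (hi : i ∈ s) : 0 < c * x i := mul_pos hc_pos (hx i hi)
  have h_pow : ε ^ #s ≤ ∏ i ∈ s, (1 - exp (-(c * x i))) := by
    simp only [h_rpow, prod_div_distrib, prod_const] at hcon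
    exact (div_le_one (prod_pos fun i hi => one_sub_exp_neg_pos (hcx i hi))).1 hcon
  have h_threshold : log ((1 - ε) ^ 2) / log r = -log (1 - ε) / c := by
    have h_log_ne : log r ≠ 0 := (log_neg hr0 hr1).ne
    rw [hc, log_pow]
    push_cast
    field_simp
  rw [h_threshold, div_pow, div_le_iff₀' (pow_pos hc_pos _)]
  simpa only [prod_mul_distrib, prod_const] using
    neg_log_one_sub_pow_card_le_prod hε0 hε1 hcx h_pow

end Finset

/-- Lemma 5: the geometric mean of the numbers of quantization levels over a block,
subject to the block expansion-rate constraint, is at least the threshold `N̄`. -/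
theorem stmt_18 (m : ℕ) (hm : 1 ≤ m) (A ε : ℝ) (hε0 : 0 < ε) (hε1 : ε < 1)
    (hA : 1 < A - ε) (r Nbar : ℝ) (hr : r = (A - ε) / (A + ε))
    (hNbar : Nbar = Real.log ((1 - ε) ^ 2) / Real.log r)
    (x : Fin m → ℝ) (hx : ∀ j, 0 < x j)
    (hcon : ∏ j, ε / (1 - r ^ (x j / 2)) ≤ 1) :
    Nbar ^ m ≤ ∏ j, x j := by
  have hr0 : 0 < r := hr ▸ div_pos (by linarith) (by linarith)
  have hr1 : r < 1 := hr ▸ (div_lt_one (by linarith)).2 (by linarith)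
  simpa only [hNbar, card_univ, Fintype.card_fin] using
    stmt_18_general hε0.le hε1 hr0 hr1 (fun j _ => hx j) hcon
end
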